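/- The restriction of 𝒲([2,1]) to symmetric functions is given in power-sum coordinates by: for every polynomial F in p₁, p₂, … and every N ≥ 1, (1/2)·Σ_{a,b,c=1}^N :D_{ab}D_{ba}D_{cc}:(F(p(X))) equals the value at p = p(X) of [(1/2)Σ_{a,b≥1} (a+b)(a+b−2)·p_a p_b·∂/∂p_{a+b} + (1/2)Σ_{a,b≥1} a·b·(a+b−2)·p_{a+b}·∂²/(∂p_a∂p_b) + (1/2)Σ_{a,b,c≥1} (a+b)·c·p_a p_b p_c·∂²/(∂p_{a+b}∂p_c) + (1/2)Σ_{a,b,c≥1} a·b·c·p_a p_{b+c}·∂³/(∂p_a∂p_b∂p_c)] F. -/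

import Mathlib

open scoped Classical
open MvPolynomial

/-- The polynomial ring `ℚ[X_{ij} : 1 ≤ i,j ≤ N]` in the entries of an `N×N` matrix of
independent variables. -/
abbrev RN (N : ℕ) : Type := MvPolynomial (Fin N × Fin N) ℚ

/-- The `N×N` matrix `X` of independent variables. -/
noncomputable def XM (N : ℕ) : Matrix (Fin N) (Fin N) (RN N) :=
  Matrix.of fun i j => MvPolynomial.X (i, j)

/-- The power sums `p_k = tr X^k`. -/
noncomputable def pSub (N : ℕ) (k : ℕ+) : RN N := Matrix.trace ((XM N) ^ (k : ℕ))

/-- Substitution `F ↦ F(p(X))` of `p_k = tr X^k` into a polynomial in `p₁, p₂, …`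
(the variable of index `k : ℕ+` is `p_k`). -/
noncomputable def psubst (N : ℕ) : MvPolynomial ℕ+ ℚ →ₐ[ℚ] RN N :=
  MvPolynomial.aeval (pSub N)

/-- The operator `D_{ab} = Σ_{e=1}^N X_{ae} ∂/∂X_{be}`. -/
noncomputable def DN (N : ℕ) (a b : Fin N) (P : RN N) : RN N :=
  ∑ e : Fin N, MvPolynomial.X (a, e) * MvPolynomial.pderiv (b, e) P

/-- The normally ordered operator
`:D_{a₁b₁}⋯D_{a_nb_n}: = Σ_{e₁,…,e_n=1}^N X_{a₁e₁}⋯X_{a_ne_n} ∂ⁿ/(∂X_{b₁e₁}⋯∂X_{b_ne_n})`. -/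
noncomputable def NOpN (N : ℕ) {n : ℕ} (a b : Fin n → Fin N) (P : RN N) : RN N :=
  ∑ e : Fin n → Fin N,
    (∏ i, MvPolynomial.X (a i, e i)) *
      (List.ofFn (fun i => ((b i, e i) : Fin N × Fin N))).foldr
        (fun v G => MvPolynomial.pderiv v G) P

/-- The full cycle type of a permutation of `Fin n`, including fixed points
(i.e. rows of length 1). -/
noncomputable def fullCycleType {n : ℕ} (g : Equiv.Perm (Fin n)) : Multiset ℕ :=
  g.cycleType + Multiset.replicate (n - g.cycleType.sum) 1

/-- `κ(Δ) = (∏_k m_k! k^{m_k})⁻¹` where `m_k` is the number of rows of length `k`. -/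
noncomputable def kappa (parts : Multiset ℕ) : ℚ :=
  (∏ k ∈ parts.toFinset, (((parts.count k).factorial : ℚ) * (k : ℚ) ^ (parts.count k)))⁻¹

/-- The operator `𝒲_N(Δ) = κ(Δ) Σ_{a₁,…,a_n=1}^N :D_{a₁a_{g(1)}}⋯D_{a_na_{g(n)}}:`
computed from a permutation `g` of cycle type `Δ`. -/
noncomputable def WN (N : ℕ) {n : ℕ} (Δ : Nat.Partition n) (g : Equiv.Perm (Fin n))
    (P : RN N) : RN N :=
  kappa Δ.parts • ∑ a : Fin n → Fin N, NOpN N a (fun i => a (g i)) P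

/-!
Let `E` be the Euler operator. Commuting `E` past `n` derivatives costs `n`, so summing
`:D_{a₁b₁}⋯D_{a_nb_n} D_{cc}:` over `c` gives `:D_{a₁b₁}⋯D_{a_nb_n}: ∘ (E - n)`; in particular
`:tr D² tr D: = :tr D²: ∘ (E - 2)`. By the second order chain rule `:tr D²:` acts on functions of
the `tr X^k` as the cut-and-join operator: the second derivatives of `tr X^k` cut, the products of
first derivatives of `tr X^j` and `tr X^k` join. In these coordinates `E` is `∑ k p_k ∂/∂p_k`, and
commuting it past the derivatives in the cut and the join part produces the two triple sums and
adds `a + b` to the factor `-2` in the two double sums.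
-/

section Derivations

variable {R A M σ τ : Type*}

theorem pderiv_comm [CommSemiring R] (i j : σ) (P : MvPolynomial σ R) :
    pderiv i (pderiv j P) = pderiv j (pderiv i P) := by
  rcases eq_or_ne i j with rfl | hij
  · rfl
  ext m
  simp only [coeff_pderiv, Finsupp.add_apply, Finsupp.single_eq_of_ne hij,
    Finsupp.single_eq_of_ne hij.symm, add_zero, add_right_comm m]
  ring

theorem pderiv_pderiv_eq_zero [CommSemiring R] {S : Finset σ} {P : MvPolynomial σ R}
    (hP : ∀ k ∉ S, pderiv k P = 0) {i j : σ} (h : i ∉ S ∨ j ∉ S) : pderiv i (pderiv j P) = 0 := by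
  rcases h with hi | hj
  · rw [pderiv_comm, hP i hi, map_zero]
  · rw [hP j hj, map_zero]

theorem pderiv_foldr_pderiv [CommSemiring R] (i : σ) (l : List σ) (P : MvPolynomial σ R) :
    pderiv i (l.foldr (fun j Q => pderiv j Q) P) =
      l.foldr (fun j Q => pderiv j Q) (pderiv i P) := by
  induction l with
  | nil => rfl
  | cons j l ih => rw [List.foldr_cons, List.foldr_cons, pderiv_comm, ih]

theorem derivation_eq_sum_pderiv_smul [CommSemiring R] [AddCommMonoid M] [Module R M]
    [Module (MvPolynomial σ R) M] [IsScalarTower R (MvPolynomial σ R) M]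
    (D : Derivation R (MvPolynomial σ R) M) {S : Finset σ} {P : MvPolynomial σ R}
    (hP : ∀ k ∉ S, pderiv k P = 0) :
    D P = ∑ k ∈ S, pderiv k P • D (X k) := by
  let T := P.vars ∪ S
  let gradient : Derivation R (MvPolynomial σ R) M :=
    ∑ k ∈ T, (LinearMap.toSpanSingleton (MvPolynomial σ R) M (D (X k))).compDer (pderiv k)
  have gradient_apply (Q : MvPolynomial σ R) :
      gradient Q = ∑ k ∈ T, pderiv k Q • D (X k) := by
    simp only [gradient, ← Derivation.coeFnAddMonoidHom_apply, map_sum, Finset.sum_apply]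
    rfl
  have agree : ∀ k ∈ P.vars, D (X k) = gradient (X k) := fun k hk => by
    simp [gradient_apply, pderiv_X, Pi.single_apply, T, hk]
  rw [derivation_eq_of_forall_mem_vars agree, gradient_apply]
  exact (Finset.sum_subset Finset.subset_union_right fun k _ hk => by
    rw [hP k hk, zero_smul]).symm

theorem derivation_aeval [CommSemiring R] [CommSemiring A] [Algebra R A] (D : Derivation R A A)
    (f : σ → A) {S : Finset σ} {G : MvPolynomial σ R} (hG : ∀ k ∉ S, pderiv k G = 0) :
    D (aeval f G) = ∑ k ∈ S, aeval f (pderiv k G) * D (f k) := by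
  let _ : Algebra (MvPolynomial σ R) A := (aeval f).toAlgebra
  have : IsScalarTower R (MvPolynomial σ R) A := .of_algebraMap_eq' (aeval f).comp_algebraMap.symm
  have := derivation_eq_sum_pderiv_smul (D.compAlgebraMap (MvPolynomial σ R)) hG
  simpa [Algebra.smul_def, RingHom.algebraMap_toAlgebra] using this

theorem sum_mul_derivation_derivation_aeval [CommSemiring R] [CommSemiring A] [Algebra R A]
    (T : Finset τ) (c : τ → A) (D D' : τ → Derivation R A A) (f : σ → A) {S : Finset σ}
    {G : MvPolynomial σ R} (hG : ∀ k ∉ S, pderiv k G = 0) :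
    ∑ t ∈ T, c t * D t (D' t (aeval f G)) =
      ∑ k ∈ S, (∑ t ∈ T, c t * D t (D' t (f k))) * aeval f (pderiv k G) +
      ∑ j ∈ S, ∑ k ∈ S, (∑ t ∈ T, c t * (D t (f j) * D' t (f k))) *
        aeval f (pderiv j (pderiv k G)) := by
  have second_order_chain_rule (t : τ) : D t (D' t (aeval f G)) =
      ∑ k ∈ S, D t (D' t (f k)) * aeval f (pderiv k G) +
      ∑ j ∈ S, ∑ k ∈ S, D t (f j) * D' t (f k) * aeval f (pderiv j (pderiv k G)) := by
    rw [derivation_aeval (D' t) f hG, map_sum, Finset.sum_comm, ← Finset.sum_add_distrib]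
    refine Finset.sum_congr rfl fun k _ => ?_
    rw [Derivation.leibniz, derivation_aeval (D t) f fun j hj => pderiv_pderiv_eq_zero hG (.inl hj),
      smul_eq_mul, smul_eq_mul, Finset.mul_sum, mul_comm (D t _)]
    exact congrArg _ (Finset.sum_congr rfl fun j _ => by ring)
  simp only [second_order_chain_rule, mul_add, Finset.sum_add_distrib, Finset.mul_sum,
    Finset.sum_mul, ← mul_assoc]
  rw [Finset.sum_comm (s := T)]
  congr 1
  rw [Finset.sum_comm]
  exact Finset.sum_congr rfl fun j _ => Finset.sum_comm

/-- The Euler operator `∑ wₖ xₖ ∂/∂xₖ` of the grading in which the variable `xₖ` has degree `wₖ`;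
as a derivation it makes sense for infinitely many variables. -/
noncomputable def euler [CommSemiring R] (w : σ → R) :
    Derivation R (MvPolynomial σ R) (MvPolynomial σ R) :=
  mkDerivation R fun k => w k • X k

@[simp]
theorem euler_X [CommSemiring R] (w : σ → R) (k : σ) : euler w (X k) = w k • X k :=
  mkDerivation_X R _ k

theorem euler_eq_sum [CommSemiring R] (w : σ → R) {S : Finset σ} {P : MvPolynomial σ R}
    (hP : ∀ k ∉ S, pderiv k P = 0) :
    euler w P = ∑ k ∈ S, w k • (X k * pderiv k P) := by
  simp [derivation_eq_sum_pderiv_smul (euler w) hP, mul_comm]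

theorem pderiv_euler [CommRing R] (w : σ → R) (i : σ) (P : MvPolynomial σ R) :
    pderiv i (euler w P) = euler w (pderiv i P) + w i • pderiv i P := by
  have commutator : ⁅pderiv (R := R) i, euler w⁆ = w i • pderiv i := by
    refine derivation_ext fun k => ?_
    by_cases hk : i = k
    · subst hk
      simp [Derivation.commutator_apply]
    · simp [Derivation.commutator_apply, pderiv_X_of_ne (Ne.symm hk)]
  rw [← sub_eq_iff_eq_add', ← Derivation.commutator_apply, commutator, Derivation.smul_apply]

theorem pderiv_euler_eq_zero [CommRing R] (w : σ → R) {i : σ} {P : MvPolynomial σ R}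
    (hP : pderiv i P = 0) : pderiv i (euler w P) = 0 := by
  rw [pderiv_euler, hP, map_zero, smul_zero, add_zero]

theorem foldr_pderiv_euler [CommRing R] (w : σ → R) (l : List σ) (P : MvPolynomial σ R) :
    l.foldr (fun i Q => pderiv i Q) (euler w P) =
      euler w (l.foldr (fun i Q => pderiv i Q) P) +
        (l.map w).sum • l.foldr (fun i Q => pderiv i Q) P := by
  induction l with
  | nil => simp
  | cons i l ih =>
    simp only [List.foldr_cons, ih, map_add, Derivation.map_smul, pderiv_euler, List.map_cons,
      List.sum_cons, add_smul, add_assoc]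

theorem foldr_pderiv_euler_eq_sum [CommRing R] (w : σ → R) (l : List σ) {S : Finset σ}
    {P : MvPolynomial σ R} (hP : ∀ k ∉ S, pderiv k P = 0) :
    l.foldr (fun i Q => pderiv i Q) (euler w P) =
      ∑ k ∈ S, w k • (X k * l.foldr (fun i Q => pderiv i Q) (pderiv k P)) +
        (l.map w).sum • l.foldr (fun i Q => pderiv i Q) P := by
  have hl (k) (hk : k ∉ S) : pderiv k (l.foldr (fun i Q => pderiv i Q) P) = 0 := by
    rw [pderiv_foldr_pderiv, hP k hk]
    exact List.foldrRecOn (motive := (· = 0)) l _ rfl fun Q hQ i _ => by rw [hQ, map_zero]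
  simp only [foldr_pderiv_euler, euler_eq_sum w hl, pderiv_foldr_pderiv]

end Derivations

section MatrixDerivations

variable {R A n : Type*} [CommSemiring R] [CommSemiring A] [Algebra R A] [Fintype n]

theorem map_derivation_mul (D : Derivation R A A) (B C : Matrix n n A) :
    (B * C).map D = B.map D * C + B * C.map D := by
  ext i j
  simp [Matrix.mul_apply, Finset.sum_add_distrib, add_comm, mul_comm]

theorem map_derivation_pow [DecidableEq n] (D : Derivation R A A) (B : Matrix n n A) (m : ℕ) :
    (B ^ m).map D = ∑ i ∈ Finset.range m, B ^ i * B.map D * B ^ (m - 1 - i) := by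
  induction m with
  | zero => ext i j; simp [Matrix.one_apply, apply_ite D]
  | succ m ih =>
    rw [pow_succ, map_derivation_mul, ih, Finset.sum_mul, Finset.sum_range_succ]
    congr 1
    · refine Finset.sum_congr rfl fun i hi => ?_
      have hi' : m + 1 - 1 - i = m - 1 - i + 1 := by have := Finset.mem_range.1 hi; omega
      rw [hi', pow_succ, Matrix.mul_assoc _ (B ^ _)]
    · simp

theorem derivation_trace_pow [DecidableEq n] (D : Derivation R A A) (B : Matrix n n A) (m : ℕ) :
    D (B ^ m).trace = m * (B ^ (m - 1) * B.map D).trace := by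
  have cyclic (i) (hi : i ∈ Finset.range m) :
      (B ^ i * B.map D * B ^ (m - 1 - i)).trace = (B ^ (m - 1) * B.map D).trace := by
    have hi' : m - 1 - i + i = m - 1 := by have := Finset.mem_range.1 hi; omega
    rw [Matrix.trace_mul_comm, ← Matrix.mul_assoc, ← pow_add, hi']
  rw [AddMonoidHom.map_trace D, map_derivation_pow, Matrix.trace_sum, Finset.sum_congr rfl cyclic]
  simp

theorem trace_mul_eq_sum (B C : Matrix n n A) :
    (B * C).trace = ∑ u : n × n, B u.1 u.2 * C u.2 u.1 := by
  simp only [Fintype.sum_prod_type, Matrix.trace, Matrix.diag, Matrix.mul_apply]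

theorem trace_mul_mul_mul (B C D E : Matrix n n A) :
    (B * C * (D * E)).trace =
      ∑ t : (n × n) × (n × n), B t.1.1 t.1.2 * D t.2.1 t.2.2 * (C t.1.2 t.2.1 * E t.2.2 t.1.1) := by
  simp only [Fintype.sum_prod_type, Matrix.trace, Matrix.diag, Matrix.mul_apply, Finset.sum_mul_sum]
  refine Finset.sum_congr rfl fun a _ => ?_
  rw [Finset.sum_comm]
  exact Finset.sum_congr rfl fun e _ => Finset.sum_congr rfl fun b _ =>
    Finset.sum_congr rfl fun f _ => by ring

theorem trace_mul_mul_trace_mul (B C D E : Matrix n n A) :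
    (B * C).trace * (D * E).trace =
      ∑ t : (n × n) × (n × n), B t.1.1 t.1.2 * D t.2.1 t.2.2 * (C t.1.2 t.1.1 * E t.2.2 t.2.1) := by
  rw [trace_mul_eq_sum, trace_mul_eq_sum, Finset.sum_mul_sum, ← Fintype.sum_prod_type']
  exact Finset.sum_congr rfl fun t _ => by ring

end MatrixDerivations

section PowerSums

variable (N : ℕ)

theorem map_pderiv_XM (v : Fin N × Fin N) : (XM N).map (pderiv v) = Matrix.single v.1 v.2 1 := by
  ext i j
  simp [XM, pderiv_X, Pi.single_apply, Matrix.single_apply, Prod.ext_iff, eq_comm]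

theorem pderiv_XM_pow_apply (v : Fin N × Fin N) (m : ℕ) (i j : Fin N) :
    pderiv v ((XM N ^ m) i j) =
      ∑ r ∈ Finset.range m, (XM N ^ r) i v.1 * (XM N ^ (m - 1 - r)) v.2 j := by
  have := congrFun₂ (map_derivation_pow (pderiv v) (XM N) m) i j
  simpa [map_pderiv_XM, Matrix.sum_apply, Matrix.mul_apply, Matrix.single_apply, ite_and] using this

theorem pderiv_pSub (v : Fin N × Fin N) (k : ℕ+) :
    pderiv v (pSub N k) = (k : RN N) * (XM N ^ ((k : ℕ) - 1)) v.2 v.1 := by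
  rw [pSub, derivation_trace_pow, map_pderiv_XM, Matrix.trace_mul_single]
  simp

theorem euler_pSub (k : ℕ+) : euler 1 (pSub N k) = (k : ℚ) • pSub N k := by
  have hk : (k : ℕ) = (k - 1 : ℕ) + 1 := (Nat.sub_add_cancel k.pos).symm
  calc euler 1 (pSub N k)
    _ = ∑ v, X v * ((k : RN N) * (XM N ^ (k - 1 : ℕ)) v.2 v.1) := by
      simp only [euler_eq_sum 1 (S := Finset.univ) (by simp), pderiv_pSub, Pi.one_apply, one_smul]
    _ = k * (XM N * XM N ^ (k - 1 : ℕ)).trace := by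
      rw [trace_mul_eq_sum, Finset.mul_sum]
      exact Finset.sum_congr rfl fun v _ => mul_left_comm _ _ _
    _ = (k : ℚ) • pSub N k := by
      rw [← pow_succ', ← hk, Nat.cast_smul_eq_nsmul, nsmul_eq_mul, pSub]

theorem psubst_X (k : ℕ+) : psubst N (X k) = pSub N k :=
  aeval_X _ k

theorem euler_psubst (F : MvPolynomial ℕ+ ℚ) :
    euler 1 (psubst N F) = psubst N (euler (fun k : ℕ+ => (k : ℚ)) F) := by
  have hF (k) (hk : k ∉ F.vars) : pderiv k F = 0 := pderiv_eq_zero_of_notMem_vars hk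
  rw [psubst, derivation_aeval (euler 1) (pSub N) hF, euler_eq_sum _ hF, map_sum]
  refine Finset.sum_congr rfl fun k _ => ?_
  rw [euler_pSub, map_smul, map_mul, aeval_X, mul_smul_comm, mul_comm]

theorem NOpN_snoc {n : ℕ} (a b : Fin n → Fin N) (c d : Fin N) (P : RN N) :
    NOpN N (Fin.snoc a c : Fin (n + 1) → Fin N) (Fin.snoc b d : Fin (n + 1) → Fin N) P =
      ∑ e : Fin n → Fin N, (∏ i, X (a i, e i)) * ∑ g, X (c, g) *
        (List.ofFn fun i => (b i, e i)).foldr (fun v Q => pderiv v Q) (pderiv (d, g) P) := by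
  rw [NOpN, ← (Fin.snocEquiv fun _ => Fin N).sum_comp, Fintype.sum_prod_type, Finset.sum_comm]
  refine Finset.sum_congr rfl fun e _ => ?_
  rw [Finset.mul_sum]
  refine Finset.sum_congr rfl fun g _ => ?_
  rw [List.ofFn_succ', List.concat_eq_append, List.foldr_append]
  simp [Fin.snocEquiv, Fin.prod_univ_castSucc, mul_assoc]

theorem sum_NOpN_snoc {n : ℕ} (a b : Fin n → Fin N) (P : RN N) :
    ∑ c, NOpN N (Fin.snoc a c : Fin (n + 1) → Fin N) (Fin.snoc b c : Fin (n + 1) → Fin N) P =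
      NOpN N a b (euler 1 P) - (n : ℚ) • NOpN N a b P := by
  have contract (l : List (Fin N × Fin N)) :
      ∑ c, ∑ g, X (c, g) * l.foldr (fun v Q => pderiv v Q) (pderiv (c, g) P) =
        l.foldr (fun v Q => pderiv v Q) (euler 1 P) -
          (l.length : ℚ) • l.foldr (fun v Q => pderiv v Q) P := by
    rw [foldr_pderiv_euler_eq_sum 1 l (S := Finset.univ) (by simp), Fintype.sum_prod_type]
    simp [Pi.one_def]
  simp only [NOpN_snoc]
  rw [Finset.sum_comm, NOpN, NOpN, Finset.smul_sum, ← Finset.sum_sub_distrib]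
  refine Finset.sum_congr rfl fun e _ => ?_
  rw [← Finset.mul_sum, contract, List.length_ofFn, mul_sub, mul_smul_comm]

/-- The operator `:tr D²: = ∑ :D_{ab} D_{ba}:`. -/
noncomputable def trDSq (P : RN N) : RN N :=
  ∑ a, ∑ b, NOpN N ![a, b] ![b, a] P

theorem sum_NOpN_eq_trDSq (P : RN N) :
    ∑ a, ∑ b, ∑ c, NOpN N ![a, b, c] ![b, a, c] P =
      trDSq N (euler 1 P) - (2 : ℚ) • trDSq N P := by
  have snoc_pair (a b c : Fin N) : ![a, b, c] = Fin.snoc ![a, b] c := by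
    ext i
    fin_cases i <;> rfl
  simp only [snoc_pair, sum_NOpN_snoc, trDSq, Finset.sum_sub_distrib, Finset.smul_sum]
  rfl

theorem trDSq_eq_sum (P : RN N) :
    trDSq N P = ∑ t : (Fin N × Fin N) × (Fin N × Fin N),
      X t.1 * X t.2 * pderiv (t.2.1, t.1.2) (pderiv (t.1.1, t.2.2) P) := by
  have NOpN_pair (a b : Fin N) : NOpN N ![a, b] ![b, a] P =
      ∑ e, ∑ f, X (a, e) * X (b, f) * pderiv (b, e) (pderiv (a, f) P) := by
    rw [NOpN, ← (finTwoArrowEquiv (Fin N)).symm.sum_comp, Fintype.sum_prod_type]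
    simp [Fin.prod_univ_two]
  simp only [trDSq, NOpN_pair, Fintype.sum_prod_type]
  exact Finset.sum_congr rfl fun a _ => Finset.sum_comm

end PowerSums

section Sums

variable {α M : Type*} [AddCommMonoid M] {S : Finset α}

theorem finsum₂_eq_sum {f : α → α → M} (hf : ∀ a b, a ∉ S ∨ b ∉ S → f a b = 0) :
    ∑ᶠ a, ∑ᶠ b, f a b = ∑ a ∈ S, ∑ b ∈ S, f a b := by
  rw [finsum_eq_sum_of_support_subset]
  · refine Finset.sum_congr rfl fun a _ => finsum_eq_sum_of_support_subset _ fun b hb => ?_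
    exact not_imp_comm.1 (fun h => hf a b (.inr h)) hb
  · refine fun a ha => not_imp_comm.1 (fun h => ?_) ha
    exact finsum_eq_zero_of_forall_eq_zero fun b => hf a b (.inl h)

theorem finsum₃_eq_sum {f : α → α → α → M}
    (hf : ∀ a b c, a ∉ S ∨ b ∉ S ∨ c ∉ S → f a b c = 0) :
    ∑ᶠ a, ∑ᶠ b, ∑ᶠ c, f a b c = ∑ a ∈ S, ∑ b ∈ S, ∑ c ∈ S, f a b c := by
  rw [finsum_eq_sum_of_support_subset]
  · exact Finset.sum_congr rfl fun a _ => finsum₂_eq_sum fun b c h => hf a b c (.inr h)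
  · refine fun a ha => not_imp_comm.1 (fun h => ?_) ha
    exact finsum_eq_zero_of_forall_eq_zero fun b =>
      finsum_eq_zero_of_forall_eq_zero fun c => hf a b c (.inl h)

theorem sum_range_pred_eq_sum_Iio (k : ℕ+) (f : ℕ → M) :
    ∑ r ∈ Finset.range (k - 1), f r = ∑ a ∈ Finset.Iio k, f a.natPred := by
  refine Finset.sum_nbij' Nat.succPNat PNat.natPred ?_ ?_ ?_ ?_ ?_
  · intro r hr
    rw [Finset.mem_range] at hr
    rw [Finset.mem_Iio, ← PNat.coe_lt_coe, Nat.succPNat_coe]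
    omega
  · intro a ha
    rw [Finset.mem_Iio, ← PNat.natPred_lt_natPred] at ha
    exact Finset.mem_range.2 ha
  all_goals simp

theorem sum_Iic_sum_Iio_sub (m : ℕ+) {f : ℕ+ → ℕ+ → M}
    (hf : ∀ a b, a + b ∉ Finset.Iic m → f a b = 0) :
    ∑ k ∈ Finset.Iic m, ∑ a ∈ Finset.Iio k, f a (k - a) =
      ∑ a ∈ Finset.Iic m, ∑ b ∈ Finset.Iic m, f a b := by
  rw [← Finset.sum_product', Finset.sum_sigma',
    ← Finset.sum_filter_of_ne (s := Finset.Iic m ×ˢ Finset.Iic m)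
      (p := fun x => x.1 + x.2 ∈ Finset.Iic m) fun x _ => not_imp_comm.1 (hf x.1 x.2)]
  refine Finset.sum_bij' (fun x _ => (x.2, x.1 - x.2)) (fun y _ => ⟨y.1 + y.2, y.1⟩) ?_ ?_ ?_ ?_ ?_
  · rintro ⟨k, a⟩ h
    simp only [Finset.mem_sigma, Finset.mem_Iic, Finset.mem_Iio] at h
    simp only [Finset.mem_filter, Finset.mem_product, Finset.mem_Iic, PNat.add_sub_of_lt h.2]
    exact ⟨⟨h.2.le.trans h.1, (PNat.sub_le k a).trans h.1⟩, h.1⟩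
  · rintro ⟨a, b⟩ h
    simpa [PNat.lt_add_right] using (Finset.mem_filter.1 h).2
  · rintro ⟨k, a⟩ h
    simp [PNat.add_sub_of_lt (Finset.mem_Iio.1 (Finset.mem_sigma.1 h).2)]
  · rintro ⟨a, b⟩ -
    simp [add_comm a b]
  · rintro ⟨k, a⟩ -
    rfl

end Sums

section CutJoin

theorem trDSq_pSub (N : ℕ) (k : ℕ+) :
    trDSq N (pSub N k) = k * ∑ a ∈ Finset.Iio k, pSub N a * pSub N (k - a) := by
  have pair_of_traces (r) (hr : r ∈ Finset.range (k - 1)) :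
      ∑ t : (Fin N × Fin N) × (Fin N × Fin N),
        X t.1 * X t.2 * ((XM N ^ r) t.2.2 t.2.1 * (XM N ^ (k - 1 - 1 - r : ℕ)) t.1.2 t.1.1) =
        (XM N ^ (r + 1)).trace * (XM N ^ (k - (r + 1) : ℕ)).trace := by
    have hr' : (k - (r + 1) : ℕ) = k - 1 - 1 - r + 1 := by have := Finset.mem_range.1 hr; omega
    rw [hr', pow_succ', pow_succ', mul_comm, trace_mul_mul_trace_mul]
    exact Finset.sum_congr rfl fun t _ => congrArg _ (mul_comm _ _)
  have pderiv_pderiv (u v : Fin N × Fin N) : pderiv v (pderiv u (pSub N k)) =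
      k * ∑ r ∈ Finset.range (k - 1),
        (XM N ^ r) u.2 v.1 * (XM N ^ (k - 1 - 1 - r : ℕ)) v.2 u.1 := by
    rw [pderiv_pSub, ← nsmul_eq_mul, map_nsmul, nsmul_eq_mul, pderiv_XM_pow_apply]
  simp only [trDSq_eq_sum, pderiv_pderiv, mul_left_comm _ (k : RN N), ← Finset.mul_sum]
  simp only [Finset.mul_sum (s := Finset.range _)]
  rw [Finset.sum_comm, Finset.sum_congr rfl pair_of_traces, sum_range_pred_eq_sum_Iio]
  refine congrArg _ (Finset.sum_congr rfl fun a ha => ?_)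
  rw [PNat.natPred_add_one, pSub, pSub, PNat.sub_coe, if_pos (Finset.mem_Iio.1 ha)]

theorem sum_mul_pderiv_pSub_mul_pderiv_pSub (N : ℕ) (j k : ℕ+) :
    ∑ t : (Fin N × Fin N) × (Fin N × Fin N),
      X t.1 * X t.2 * (pderiv (t.2.1, t.1.2) (pSub N j) * pderiv (t.1.1, t.2.2) (pSub N k)) =
      j * k * pSub N (j + k) := by
  have hjk : ((j + k : ℕ+) : ℕ) = (j - 1 + 1) + (k - 1 + 1) := by
    rw [PNat.add_coe, Nat.sub_add_cancel j.pos, Nat.sub_add_cancel k.pos]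
  rw [pSub.eq_1 N (j + k), hjk, pow_add, pow_succ', pow_succ', trace_mul_mul_mul, Finset.mul_sum]
  refine Finset.sum_congr rfl fun t _ => ?_
  rw [pderiv_pSub, pderiv_pSub, XM, Matrix.of_apply, Matrix.of_apply]
  ring

/-- The cut part `∑ (a + b) pₐ p_b ∂/∂p_{a+b}` of the cut-and-join operator. -/
noncomputable def cut (F : MvPolynomial ℕ+ ℚ) : MvPolynomial ℕ+ ℚ :=
  ∑ᶠ a : ℕ+, ∑ᶠ b : ℕ+, ((a : ℚ) + b) • (X a * X b * pderiv (a + b) F)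

/-- The join part `∑ a b p_{a+b} ∂²/(∂pₐ ∂p_b)` of the cut-and-join operator. -/
noncomputable def join (F : MvPolynomial ℕ+ ℚ) : MvPolynomial ℕ+ ℚ :=
  ∑ᶠ a : ℕ+, ∑ᶠ b : ℕ+, ((a : ℚ) * b) • (X (a + b) * pderiv a (pderiv b F))

theorem exists_forall_pderiv_eq_zero (F : MvPolynomial ℕ+ ℚ) :
    ∃ m : ℕ+, ∀ k ∉ Finset.Iic m, pderiv k F = 0 := by
  obtain ⟨m, hm⟩ := F.vars.bddAbove
  exact ⟨m, fun k hk => pderiv_eq_zero_of_notMem_vars fun hkF => hk (Finset.mem_Iic.2 (hm hkF))⟩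

variable {m : ℕ+} {F : MvPolynomial ℕ+ ℚ}

theorem add_notMem_Iic {a b : ℕ+} (h : a ∉ Finset.Iic m ∨ b ∉ Finset.Iic m) :
    a + b ∉ Finset.Iic m := by
  simp only [Finset.mem_Iic, not_le] at h ⊢
  rcases h with ha | hb
  · exact ha.trans (PNat.lt_add_right a b)
  · exact hb.trans (PNat.lt_add_left b a)

theorem cut_eq_sum (hF : ∀ k ∉ Finset.Iic m, pderiv k F = 0) :
    cut F = ∑ a ∈ Finset.Iic m, ∑ b ∈ Finset.Iic m,
      ((a : ℚ) + b) • (X a * X b * pderiv (a + b) F) :=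
  finsum₂_eq_sum fun a b h => by rw [hF _ (add_notMem_Iic h), mul_zero, smul_zero]

theorem join_eq_sum {S : Finset ℕ+} (hF : ∀ k ∉ S, pderiv k F = 0) :
    join F = ∑ a ∈ S, ∑ b ∈ S, ((a : ℚ) * b) • (X (a + b) * pderiv a (pderiv b F)) :=
  finsum₂_eq_sum fun a b h => by rw [pderiv_pderiv_eq_zero hF h, mul_zero, smul_zero]

theorem trDSq_psubst (N : ℕ) (F : MvPolynomial ℕ+ ℚ) :
    trDSq N (psubst N F) = psubst N (cut F + join F) := by
  obtain ⟨m, hF⟩ := exists_forall_pderiv_eq_zero F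
  have cut_reindex := sum_Iic_sum_Iio_sub m
    (f := fun a b => ((a : ℚ) + b) • (X a * X b * pderiv (a + b) F))
    fun a b h => by rw [hF _ h, mul_zero, smul_zero]
  rw [trDSq_eq_sum, psubst, sum_mul_derivation_derivation_aeval _ _ _ _ _ hF, ← psubst,
    cut_eq_sum hF, join_eq_sum hF, ← cut_reindex, map_add, map_sum, map_sum]
  refine congrArg₂ _ (Finset.sum_congr rfl fun k _ => ?_) (Finset.sum_congr rfl fun a _ => ?_)
  · rw [← trDSq_eq_sum, trDSq_pSub, map_sum, Finset.mul_sum, Finset.sum_mul]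
    refine Finset.sum_congr rfl fun a ha => ?_
    have hak := PNat.add_sub_of_lt (Finset.mem_Iio.1 ha)
    rw [← Nat.cast_add, ← PNat.add_coe, hak, map_smul, map_mul, map_mul, psubst_X, psubst_X,
      Nat.cast_smul_eq_nsmul, nsmul_eq_mul, mul_assoc]
  · rw [map_sum]
    refine Finset.sum_congr rfl fun b _ => ?_
    rw [sum_mul_pderiv_pSub_mul_pderiv_pSub, map_smul, map_mul, psubst_X,
      ← Nat.cast_mul (α := ℚ), Nat.cast_smul_eq_nsmul, nsmul_eq_mul, Nat.cast_mul, mul_assoc]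

theorem cut_euler_sub (F : MvPolynomial ℕ+ ℚ) :
    cut (euler (fun k : ℕ+ => (k : ℚ)) F) - (2 : ℚ) • cut F =
      (∑ᶠ a : ℕ+, ∑ᶠ b : ℕ+, (((a : ℚ) + b) * ((a : ℚ) + b - 2)) •
        (X a * X b * pderiv (a + b) F)) +
      ∑ᶠ a : ℕ+, ∑ᶠ b : ℕ+, ∑ᶠ c : ℕ+, (((a : ℚ) + b) * c) •
        (X a * X b * X c * pderiv (a + b) (pderiv c F)) := by
  obtain ⟨m, hF⟩ := exists_forall_pderiv_eq_zero F
  rw [cut_eq_sum fun k hk => pderiv_euler_eq_zero _ (hF k hk), cut_eq_sum hF,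
    finsum₂_eq_sum (S := Finset.Iic m)
      fun a b h => by rw [hF _ (add_notMem_Iic h), mul_zero, smul_zero],
    finsum₃_eq_sum (S := Finset.Iic m) fun a b c h => by
      rw [pderiv_pderiv_eq_zero hF ((or_assoc.2 h).imp_left add_notMem_Iic), mul_zero, smul_zero]]
  simp only [Finset.smul_sum, ← Finset.sum_sub_distrib, ← Finset.sum_add_distrib]
  refine Finset.sum_congr rfl fun a _ => Finset.sum_congr rfl fun b _ => ?_
  have commute := foldr_pderiv_euler_eq_sum (fun k : ℕ+ => (k : ℚ)) [a + b] hF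
  simp only [List.foldr_cons, List.foldr_nil, List.map_cons, List.map_nil, List.sum_cons,
    List.sum_nil, add_zero, PNat.add_coe, Nat.cast_add] at commute
  have summand (c : ℕ+) : (((a : ℚ) + b) * c) •
      (X a * X b * X c * pderiv (a + b) (pderiv c F)) =
        ((a : ℚ) + b) • (X a * X b * ((c : ℚ) • (X c * pderiv (a + b) (pderiv c F)))) := by
    rw [mul_smul_comm, smul_smul, mul_assoc (X a * X b)]
  rw [commute, mul_add, smul_add, Finset.mul_sum, Finset.smul_sum,
    Finset.sum_congr rfl fun c _ => summand c, mul_smul_comm]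
  module

theorem join_euler_sub (F : MvPolynomial ℕ+ ℚ) :
    join (euler (fun k : ℕ+ => (k : ℚ)) F) - (2 : ℚ) • join F =
      (∑ᶠ a : ℕ+, ∑ᶠ b : ℕ+, ((a : ℚ) * b * ((a : ℚ) + b - 2)) •
        (X (a + b) * pderiv a (pderiv b F))) +
      ∑ᶠ a : ℕ+, ∑ᶠ b : ℕ+, ∑ᶠ c : ℕ+, ((a : ℚ) * b * c) •
        (X a * X (b + c) * pderiv a (pderiv b (pderiv c F))) := by
  obtain ⟨m, hF⟩ := exists_forall_pderiv_eq_zero F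
  have hF' (b c : ℕ+) (k) (hk : k ∉ Finset.Iic m) : pderiv k (pderiv b (pderiv c F)) = 0 := by
    rw [pderiv_comm, pderiv_pderiv_eq_zero hF (.inl hk), map_zero]
  rw [join_eq_sum fun k hk => pderiv_euler_eq_zero _ (hF k hk), join_eq_sum hF,
    finsum₂_eq_sum (S := Finset.Iic m)
      fun a b h => by rw [pderiv_pderiv_eq_zero hF h, mul_zero, smul_zero],
    finsum₃_eq_sum (S := Finset.Iic m) fun a b c h => by
      rcases h with ha | h
      · rw [hF' b c a ha, mul_zero, smul_zero]
      · rw [pderiv_pderiv_eq_zero hF h, map_zero, mul_zero, smul_zero],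
    Finset.sum_comm_cycle, Finset.sum_comm_cycle]
  simp only [Finset.smul_sum, ← Finset.sum_sub_distrib, ← Finset.sum_add_distrib]
  refine Finset.sum_congr rfl fun a _ => Finset.sum_congr rfl fun b _ => ?_
  have commute := foldr_pderiv_euler_eq_sum (fun k : ℕ+ => (k : ℚ)) [a, b] hF
  simp only [List.foldr_cons, List.foldr_nil, List.map_cons, List.map_nil, List.sum_cons,
    List.sum_nil, add_zero] at commute
  have summand (c : ℕ+) : ((c : ℚ) * a * b) •
      (X c * X (a + b) * pderiv c (pderiv a (pderiv b F))) =
        ((a : ℚ) * b) • (X (a + b) * ((c : ℚ) • (X c * pderiv a (pderiv b (pderiv c F))))) := by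
    rw [pderiv_comm c, pderiv_comm c, mul_smul_comm, smul_smul, mul_left_comm, mul_assoc (X c),
      mul_assoc, mul_comm (c : ℚ)]
  rw [commute, mul_add, smul_add, Finset.mul_sum, Finset.smul_sum,
    Finset.sum_congr rfl fun c _ => summand c, mul_smul_comm]
  module

end CutJoin

theorem W21_in_power_sum_coordinates (N : ℕ) (hN : 1 ≤ N) (F : MvPolynomial ℕ+ ℚ) :
    (1/2 : ℚ) • ∑ a : Fin N, ∑ b : Fin N, ∑ c : Fin N,
        NOpN N ![a, b, c] ![b, a, c] (psubst N F) =
      psubst N (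
        (1/2 : ℚ) • (∑ᶠ a : ℕ+, ∑ᶠ b : ℕ+,
          ((((a : ℕ) : ℚ) + ((b : ℕ) : ℚ)) * (((a : ℕ) : ℚ) + ((b : ℕ) : ℚ) - 2)) •
            (MvPolynomial.X a * MvPolynomial.X b * MvPolynomial.pderiv (a + b) F)) +
        (1/2 : ℚ) • (∑ᶠ a : ℕ+, ∑ᶠ b : ℕ+,
          (((a : ℕ) : ℚ) * ((b : ℕ) : ℚ) * (((a : ℕ) : ℚ) + ((b : ℕ) : ℚ) - 2)) •
            (MvPolynomial.X (a + b) *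
              MvPolynomial.pderiv a (MvPolynomial.pderiv b F))) +
        (1/2 : ℚ) • (∑ᶠ a : ℕ+, ∑ᶠ b : ℕ+, ∑ᶠ c : ℕ+,
          ((((a : ℕ) : ℚ) + ((b : ℕ) : ℚ)) * ((c : ℕ) : ℚ)) •
            (MvPolynomial.X a * MvPolynomial.X b * MvPolynomial.X c *
              MvPolynomial.pderiv (a + b) (MvPolynomial.pderiv c F))) +
        (1/2 : ℚ) • (∑ᶠ a : ℕ+, ∑ᶠ b : ℕ+, ∑ᶠ c : ℕ+,
          (((a : ℕ) : ℚ) * ((b : ℕ) : ℚ) * ((c : ℕ) : ℚ)) •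
            (MvPolynomial.X a * MvPolynomial.X (b + c) *
              MvPolynomial.pderiv a
                (MvPolynomial.pderiv b (MvPolynomial.pderiv c F))))) := by
  rw [sum_NOpN_eq_trDSq, euler_psubst, trDSq_psubst, trDSq_psubst, ← map_smul, ← map_sub,
    smul_add, add_sub_add_comm, cut_euler_sub, join_euler_sub, ← map_smul]
  congr 1
  module
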